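/- Suppose the primitive set ℬ ⊆ ℕ is taut. Then for each finite set A of primes and each ε > 0 there is a finite set P of primes with P ∩ A = ∅ and δ(M_{ℬ ∖ (ℬ_A ∪ M_P)}) < ε, where ℬ_A := {b ∈ ℬ : every prime factor of b lies in A}. -/

import Mathlib

open Filter Set Topology MeasureTheory

open scoped Classical

noncomputable section

/-- The set of multiples `M_B ⊆ ℤ` of a set `B ⊆ ℕ`. -/
def multiplesZ (B : Set ℕ) : Set ℤ := {n : ℤ | ∃ b ∈ B, (b : ℤ) ∣ n}

/-- The `B`-free integers `F_B = ℤ ∖ M_B`. -/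
def freeZ (B : Set ℕ) : Set ℤ := (multiplesZ B)ᶜ

/-- The logarithmically weighted averages `(1/log n) ∑_{k=1}^n 1_A(k)/k`. -/
def logWeight (A : Set ℤ) (n : ℕ) : ℝ :=
  (Real.log n)⁻¹ * ∑ k ∈ Finset.Icc 1 n, A.indicator (fun m : ℤ => ((m : ℝ))⁻¹) (k : ℤ)

/-- The lower logarithmic density of a set `A ⊆ ℤ`. -/
def logDensLow (A : Set ℤ) : ℝ := liminf (logWeight A) atTop

/-- `A ⊆ ℤ` has logarithmic density `d`. -/
def HasLogDensity (A : Set ℤ) (d : ℝ) : Prop := Tendsto (logWeight A) atTop (𝓝 d)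

/-- `B` is primitive: no element divides another one. -/
def Primitive (B : Set ℕ) : Prop := ∀ b ∈ B, ∀ b' ∈ B, b ∣ b' → b = b'

/-- `B` is Behrend: its set of multiples has logarithmic density one. -/
def IsBehrend (B : Set ℕ) : Prop := logDensLow (multiplesZ B) = 1

/-- `B` is taut: removing any element strictly decreases the logarithmic density
of the set of multiples. -/
def IsTaut (B : Set ℕ) : Prop :=
  ∀ b ∈ B, logDensLow (multiplesZ (B \ {b})) < logDensLow (multiplesZ B)

/-- `B̃^(N)`: the elements of `B` having no prime factor `≤ N`. -/
def Btilde (B : Set ℕ) (N : ℕ) : Set ℕ := {b ∈ B | ∀ p : ℕ, p.Prime → p ∣ b → N < p}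

/-- `B^(N)`: the elements of `B` all of whose prime factors are `≤ N`. -/
def Bsmooth (B : Set ℕ) (N : ℕ) : Set ℕ := {b ∈ B | ∀ p : ℕ, p.Prime → p ∣ b → p ≤ N}

/-- The set of multiples of `P`, as a subset of `ℕ`. -/
def natMultiples (P : Set ℕ) : Set ℕ := {n : ℕ | ∃ p ∈ P, p ∣ n}

/-!
Densities are measured with the zeta distribution `P_s {n} = n⁻ˢ / ζ(s)` as `s` decreases to `1`.
For `1 < t ≤ s` the law `P_t` is a multiplicative convolution with second factor `P_s` (Jordan's
totient of exponent `s - t ≥ 0` is nonnegative), so `P_s (M_C)` increases as `s` decreases to `1`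
and the density of `M_C` is a supremum. It is therefore continuous along increasing unions of `C`;
moreover, coprime sets have independent sets of multiples, because `P_s (a ∣ n) = a⁻ˢ`. This gives
a zero-one law: the density of multiples of the elements of `C` without prime factors `≤ N` either
tends to `0` as `N → ∞` or equals `1` for every `N`.

Every `b ∈ B` is a product `a * c` with the prime factors of `a` in `A` and those of `c` outside
`A`. For a fixed `a`, the second alternative of the zero-one law for the cofactors
`{c > 1 | a * c ∈ B}` would make one element of `B` superfluous up to density zero, so tautness
rules it out. If `P` consists of the primes `≤ N` outside `A`, then the elements of
`B ∖ (B_A ∪ M_P)` have density of multiples at most the sum over `a` of `1 / a` times the density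
of multiples of the cofactors without prime factors `≤ N`. As `∑ 1 / a < ∞` (an Euler product
over `A`), dominated convergence makes this small for large `N`.

The zeta distribution with `s = 1 + 1 / log n` dominates the logarithmic weights up to `n` by a
factor of `6`, which suffices, since only upper bounds and null sets have to be transferred to
logarithmic density.
-/

open scoped ENNReal

section DirichletWeight

/-- The weight `n ↦ n⁻ˢ` of Dirichlet series; it vanishes at `0` for `s ≠ 0`. -/
def dirichletWeight (s : ℝ) (n : ℕ) : ℝ≥0∞ := ENNReal.ofReal ((n : ℝ) ^ (-s))

variable {s : ℝ}

lemma dirichletWeight_zero (hs : s ≠ 0) : dirichletWeight s 0 = 0 := by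
  simp [dirichletWeight, Real.zero_rpow (neg_ne_zero.2 hs)]

lemma dirichletWeight_mul (s : ℝ) (m n : ℕ) :
    dirichletWeight s (m * n) = dirichletWeight s m * dirichletWeight s n := by
  rw [dirichletWeight, dirichletWeight, dirichletWeight, ← ENNReal.ofReal_mul (by positivity),
    ← Real.mul_rpow (by positivity) (by positivity), Nat.cast_mul]

lemma dirichletWeight_le_inv (hs : 1 ≤ s) (n : ℕ) : dirichletWeight s n ≤ (n : ℝ≥0∞)⁻¹ := by
  rcases n.eq_zero_or_pos with rfl | hn
  · simp
  have hn' : (1 : ℝ) ≤ n := by exact_mod_cast hn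
  rw [← ENNReal.ofReal_natCast, ← ENNReal.ofReal_inv_of_pos (by positivity), ← Real.rpow_neg_one]
  exact ENNReal.ofReal_le_ofReal (Real.rpow_le_rpow_of_exponent_le hn' (by linarith))

lemma tsum_dirichletWeight (hs : 1 < s) :
    ∑' n, dirichletWeight s n = ENNReal.ofReal (∑' n : ℕ, (n : ℝ) ^ (-s)) :=
  (ENNReal.ofReal_tsum_of_nonneg (fun _ => by positivity)
    (Real.summable_nat_rpow.2 (by linarith))).symm

end DirichletWeight

section JordanTotient

open scoped ArithmeticFunction.Moebius ArithmeticFunction.zeta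

/-- The arithmetic function `n ↦ n ^ α`, with value `0` at `0` also for `α = 0`. -/
def rpowArithmetic (α : ℝ) : ArithmeticFunction ℝ where
  toFun n := if n = 0 then 0 else (n : ℝ) ^ α
  map_zero' := if_pos rfl

/-- Jordan's totient of real exponent `α`: the arithmetic function `J` with
`∑_{d ∣ n} J d = n ^ α` for `n ≠ 0`. -/
def jordanTotient (α : ℝ) : ArithmeticFunction ℝ :=
  (μ : ArithmeticFunction ℝ) * rpowArithmetic α

variable {α : ℝ}

lemma rpowArithmetic_apply {n : ℕ} (hn : n ≠ 0) : rpowArithmetic α n = (n : ℝ) ^ α :=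
  if_neg hn

lemma sum_divisors_jordanTotient {n : ℕ} (hn : n ≠ 0) :
    ∑ d ∈ n.divisors, jordanTotient α d = (n : ℝ) ^ α := by
  rw [← ArithmeticFunction.coe_mul_zeta_apply, jordanTotient, mul_right_comm,
    ArithmeticFunction.coe_moebius_mul_coe_zeta, one_mul, rpowArithmetic_apply hn]

lemma isMultiplicative_jordanTotient (α : ℝ) : (jordanTotient α).IsMultiplicative := by
  refine ArithmeticFunction.isMultiplicative_moebius.intCast.mul
    (ArithmeticFunction.IsMultiplicative.iff_ne_zero.2 ⟨?_, fun {m n} hm hn _ => ?_⟩)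
  · rw [rpowArithmetic_apply one_ne_zero, Nat.cast_one, Real.one_rpow]
  · rw [rpowArithmetic_apply hm, rpowArithmetic_apply hn, rpowArithmetic_apply (mul_ne_zero hm hn),
      Nat.cast_mul, Real.mul_rpow m.cast_nonneg n.cast_nonneg]

lemma jordanTotient_prime_pow_nonneg (hα : 0 ≤ α) {p : ℕ} (hp : p.Prime) (k : ℕ) :
    0 ≤ jordanTotient α (p ^ k) := by
  cases k with
  | zero => simp [(isMultiplicative_jordanTotient α).1]
  | succ k =>
    have hsucc := sum_divisors_jordanTotient (α := α) (pow_ne_zero (k + 1) hp.ne_zero)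
    have hk := sum_divisors_jordanTotient (α := α) (pow_ne_zero k hp.ne_zero)
    rw [Nat.sum_divisors_prime_pow hp] at hsucc hk
    rw [Finset.sum_range_succ, hk] at hsucc
    have hmono : ((p ^ k : ℕ) : ℝ) ^ α ≤ ((p ^ (k + 1) : ℕ) : ℝ) ^ α := by
      gcongr
      exacts [hp.one_le, k.le_succ]
    linarith

lemma jordanTotient_nonneg (hα : 0 ≤ α) (n : ℕ) : 0 ≤ jordanTotient α n := by
  rcases eq_or_ne n 0 with rfl | hn
  · simp
  rw [(isMultiplicative_jordanTotient α).multiplicative_factorization _ hn]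
  exact Finset.prod_nonneg fun p hp =>
    jordanTotient_prime_pow_nonneg hα (Nat.prime_of_mem_primeFactors hp) _

end JordanTotient

section ZetaMeasure

lemma withDensity_count_singleton {X : Type*} [MeasurableSpace X] [MeasurableSingletonClass X]
    (f : X → ℝ≥0∞) (x : X) : Measure.count.withDensity f {x} = f x := by
  simp [withDensity_apply f (measurableSet_singleton x)]

lemma mconv_withDensity_count {f g : ℕ → ℝ≥0∞} (hf : f 0 = 0) (hg : g 0 = 0) :
    (Measure.count.withDensity f) ∗ₘ (Measure.count.withDensity g) =
      Measure.count.withDensity fun n => ∑ x ∈ n.divisorsAntidiagonal, f x.1 * g x.2 := by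
  refine Measure.ext_of_singleton fun n => ?_
  have hprod (x : ℕ × ℕ) : (Measure.count.withDensity f).prod (Measure.count.withDensity g) {x} =
      f x.1 * g x.2 := by
    rw [← Prod.mk.eta (p := x), ← Set.singleton_prod_singleton, Measure.prod_prod,
      withDensity_count_singleton, withDensity_count_singleton]
  rw [withDensity_count_singleton, Measure.mconv,
    Measure.map_apply measurable_mul (measurableSet_singleton n),
    ← Measure.tsum_indicator_apply_singleton _ _ (MeasurableSet.of_discrete)]
  rw [tsum_eq_sum (s := n.divisorsAntidiagonal)]
  · refine Finset.sum_congr rfl fun x hx => ?_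
    have hxn : x ∈ (fun p : ℕ × ℕ => p.1 * p.2) ⁻¹' {n} := (Nat.mem_divisorsAntidiagonal.1 hx).1
    rw [Set.indicator_of_mem hxn, hprod]
  · intro x hx
    refine Set.indicator_apply_eq_zero.2 fun hxn => ?_
    have hx0 : x.1 * x.2 = 0 := by
      by_contra h0
      exact hx (Nat.mem_divisorsAntidiagonal.2 ⟨hxn, hxn ▸ h0⟩)
    rw [hprod]
    rcases mul_eq_zero.1 hx0 with h | h <;> simp [h, hf, hg]

/-- The measure on `ℕ` with weights `n⁻ˢ`. -/
def dirichletMeasure (s : ℝ) : Measure ℕ := Measure.count.withDensity (dirichletWeight s)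

/-- The zeta distribution on the positive integers, `n ↦ n⁻ˢ / ζ(s)` for `s > 1`. -/
def zetaMeasure (s : ℝ) : Measure ℕ := (dirichletMeasure s univ)⁻¹ • dirichletMeasure s

variable {s t : ℝ}

lemma dirichletMeasure_univ (hs : 1 < s) :
    dirichletMeasure s univ = ENNReal.ofReal (∑' n : ℕ, (n : ℝ) ^ (-s)) := by
  rw [dirichletMeasure, withDensity_apply _ MeasurableSet.univ, Measure.restrict_univ,
    lintegral_count, tsum_dirichletWeight hs]

lemma dirichletMeasure_univ_ne_zero (s : ℝ) : dirichletMeasure s univ ≠ 0 := by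
  refine fun h => one_ne_zero (α := ℝ≥0∞) ?_
  calc (1 : ℝ≥0∞) = dirichletMeasure s {1} := by
        simp [dirichletMeasure, dirichletWeight]
    _ = 0 := measure_mono_null (subset_univ _) h

lemma dirichletMeasure_univ_ne_top (hs : 1 < s) : dirichletMeasure s univ ≠ ∞ := by
  rw [dirichletMeasure_univ hs]
  exact ENNReal.ofReal_ne_top

lemma isProbabilityMeasure_zetaMeasure (hs : 1 < s) : IsProbabilityMeasure (zetaMeasure s) :=
  ⟨ENNReal.inv_mul_cancel (dirichletMeasure_univ_ne_zero s) (dirichletMeasure_univ_ne_top hs)⟩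

lemma dirichletMeasure_eq_mul_zetaMeasure (hs : 1 < s) (U : Set ℕ) :
    dirichletMeasure s U = dirichletMeasure s univ * zetaMeasure s U :=
  (ENNReal.mul_inv_cancel_left (dirichletMeasure_univ_ne_zero s)
    (dirichletMeasure_univ_ne_top hs)).symm

lemma zetaMeasure_singleton (s : ℝ) (n : ℕ) :
    zetaMeasure s {n} = (dirichletMeasure s univ)⁻¹ * dirichletWeight s n := by
  rw [zetaMeasure, Measure.smul_apply, smul_eq_mul, dirichletMeasure, withDensity_count_singleton]

lemma zetaMeasure_eq_tsum (s : ℝ) (S : Set ℕ) : zetaMeasure s S = ∑' n : S, zetaMeasure s {↑n} := by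
  rw [tsum_subtype S fun n => zetaMeasure s {n},
    Measure.tsum_indicator_apply_singleton _ S MeasurableSet.of_discrete]

lemma zetaMeasure_image_mul (hs : s ≠ 0) (a : ℕ) (S : Set ℕ) :
    zetaMeasure s ((a * ·) '' S) = dirichletWeight s a * zetaMeasure s S := by
  rcases eq_or_ne a 0 with rfl | ha
  · rw [dirichletWeight_zero hs, zero_mul]
    refine measure_mono_null (t := {0}) (by simp) ?_
    rw [zetaMeasure_singleton, dirichletWeight_zero hs, mul_zero]
  · rw [zetaMeasure_eq_tsum, tsum_image (fun n => zetaMeasure s {n})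
      (mul_right_injective₀ ha).injOn, zetaMeasure_eq_tsum s S, ← ENNReal.tsum_mul_left]
    refine tsum_congr fun n => ?_
    rw [zetaMeasure_singleton, zetaMeasure_singleton, dirichletWeight_mul, mul_left_comm]

lemma zetaMeasure_dvd (hs : 1 < s) (a : ℕ) : zetaMeasure s {n | a ∣ n} = dirichletWeight s a := by
  have := isProbabilityMeasure_zetaMeasure hs
  have himage : {n | a ∣ n} = (a * ·) '' (univ : Set ℕ) := by
    ext n
    simp [dvd_def, eq_comm]
  rw [himage, zetaMeasure_image_mul (by positivity), measure_univ, mul_one]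

lemma dirichletWeight_le_one (hs : 1 < s) (a : ℕ) : dirichletWeight s a ≤ 1 := by
  have := isProbabilityMeasure_zetaMeasure hs
  exact zetaMeasure_dvd hs a ▸ prob_le_one

lemma exists_mconv_dirichletMeasure (ht : 0 < t) (hts : t ≤ s) :
    ∃ ν : Measure ℕ, SFinite ν ∧ ν ∗ₘ dirichletMeasure s = dirichletMeasure t := by
  have hs : s ≠ 0 := by linarith
  let f (d : ℕ) : ℝ≥0∞ := ENNReal.ofReal (jordanTotient (s - t) d) * dirichletWeight s d
  refine ⟨Measure.count.withDensity f, inferInstance, ?_⟩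
  rw [dirichletMeasure, mconv_withDensity_count (by simp [f]) (dirichletWeight_zero hs),
    dirichletMeasure]
  congr 1
  funext n
  rcases eq_or_ne n 0 with rfl | hn
  · simp [dirichletWeight_zero ht.ne']
  have hterm : ∀ x ∈ n.divisorsAntidiagonal, f x.1 * dirichletWeight s x.2 =
      ENNReal.ofReal (jordanTotient (s - t) x.1) * dirichletWeight s n := fun x hx => by
    rw [mul_assoc, ← dirichletWeight_mul, (Nat.mem_divisorsAntidiagonal.1 hx).1]
  rw [Finset.sum_congr rfl hterm, ← Finset.sum_mul,
    Nat.sum_divisorsAntidiagonal fun d _ => ENNReal.ofReal (jordanTotient (s - t) d),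
    ← ENNReal.ofReal_sum_of_nonneg fun d _ => jordanTotient_nonneg (sub_nonneg.2 hts) d,
    sum_divisors_jordanTotient hn, dirichletWeight, dirichletWeight,
    ← ENNReal.ofReal_mul (by positivity), ← Real.rpow_add (by positivity)]
  ring_nf

-- A random integer of law `zetaMeasure t` is the product of one of law `zetaMeasure s` with an
-- independent integer, and such a product stays in `U`.
lemma zetaMeasure_le_of_mul_mem (ht : 1 < t) (hts : t ≤ s) {U : Set ℕ}
    (hU : ∀ d, ∀ n ∈ U, d * n ∈ U) : zetaMeasure s U ≤ zetaMeasure t U := by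
  obtain ⟨ν, _, hν⟩ := exists_mconv_dirichletMeasure (one_pos.trans ht) hts
  have hsf : SFinite (dirichletMeasure s) := by unfold dirichletMeasure; infer_instance
  have hmul : ν univ * dirichletMeasure s U ≤ dirichletMeasure t U := by
    rw [← hν, Measure.mconv, Measure.map_apply measurable_mul MeasurableSet.of_discrete,
      ← Measure.prod_prod]
    exact measure_mono fun x hx => hU x.1 x.2 hx.2
  have huniv : dirichletMeasure t univ = ν univ * dirichletMeasure s univ := by
    rw [← hν, Measure.mconv, Measure.map_apply measurable_mul MeasurableSet.univ, preimage_univ,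
      ← univ_prod_univ, Measure.prod_prod]
  have hν0 : ν univ ≠ 0 := left_ne_zero_of_mul (huniv ▸ dirichletMeasure_univ_ne_zero t)
  have hνtop : ν univ ≠ ∞ := fun h => dirichletMeasure_univ_ne_top ht <| by
    rw [huniv, h, ENNReal.top_mul (dirichletMeasure_univ_ne_zero s)]
  calc zetaMeasure s U = (dirichletMeasure s univ)⁻¹ * dirichletMeasure s U := rfl
    _ = (ν univ * dirichletMeasure s univ)⁻¹ * (ν univ * dirichletMeasure s U) := by
        rw [ENNReal.mul_inv (.inl hν0) (.inl hνtop), mul_mul_mul_comm,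
          ENNReal.inv_mul_cancel hν0 hνtop, one_mul, mul_comm]
    _ ≤ (dirichletMeasure t univ)⁻¹ * dirichletMeasure t U := by
        rw [huniv]
        gcongr

end ZetaMeasure

section Independence

open ProbabilityTheory

variable {s : ℝ}

/-- The events `a ∣ n`, for `a` coprime to every element of `S`. -/
def coprimeDvdEvents (S : Set ℕ) : Set (Set ℕ) :=
  {E | ∃ a : ℕ, (∀ b ∈ S, a.Coprime b) ∧ E = {n | a ∣ n}}

lemma isPiSystem_coprimeDvdEvents (S : Set ℕ) : IsPiSystem (coprimeDvdEvents S) := by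
  rintro _ ⟨a, ha, rfl⟩ _ ⟨a', ha', rfl⟩ -
  refine ⟨a.lcm a', fun b hb => ?_, ?_⟩
  · exact ((ha b hb).mul_left (ha' b hb)).coprime_dvd_left (Nat.lcm_dvd_mul a a')
  · ext n
    simp [Nat.lcm_dvd_iff]

lemma measurableSet_natMultiples {S C : Set ℕ} (h : ∀ c ∈ C, ∀ b ∈ S, c.Coprime b) :
    MeasurableSet[MeasurableSpace.generateFrom (coprimeDvdEvents S)] (natMultiples C) := by
  have hunion : natMultiples C = ⋃ c ∈ C, {n | c ∣ n} := by
    ext n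
    simp [natMultiples]
  rw [hunion]
  exact MeasurableSet.biUnion C.to_countable fun c hc =>
    MeasurableSpace.measurableSet_generateFrom ⟨c, h c hc, rfl⟩

lemma indepSets_coprimeDvdEvents (hs : 1 < s) (S : Set ℕ) :
    IndepSets (coprimeDvdEvents S) (coprimeDvdEvents {a | ∀ b ∈ S, a.Coprime b})
      (zetaMeasure s) := by
  rw [IndepSets_iff]
  rintro _ _ ⟨a, ha, rfl⟩ ⟨a', ha', rfl⟩
  have hco : a.Coprime a' := (ha' a ha).symm
  have hinter : {n | a ∣ n} ∩ {n | a' ∣ n} = {n | a * a' ∣ n} := by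
    ext n
    exact ⟨fun h => hco.mul_dvd_of_dvd_of_dvd h.1 h.2,
      fun h => ⟨dvd_of_mul_right_dvd h, dvd_of_mul_left_dvd h⟩⟩
  rw [hinter, zetaMeasure_dvd hs, zetaMeasure_dvd hs, zetaMeasure_dvd hs, dirichletWeight_mul]

lemma indepSet_compl_natMultiples (hs : 1 < s) {F G : Set ℕ}
    (hFG : ∀ f ∈ F, ∀ g ∈ G, f.Coprime g) :
    IndepSet (natMultiples F)ᶜ (natMultiples G)ᶜ (zetaMeasure s) := by
  have := isProbabilityMeasure_zetaMeasure hs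
  have hle (S : Set ℕ) : MeasurableSpace.generateFrom (coprimeDvdEvents S) ≤ ⊤ := le_top
  have hindep := (indepSets_coprimeDvdEvents hs G).indep (hle _) (hle _)
    (isPiSystem_coprimeDvdEvents _) (isPiSystem_coprimeDvdEvents _) rfl rfl
  exact hindep.indepSet_of_measurableSet (measurableSet_natMultiples hFG).compl
    (measurableSet_natMultiples fun g hg a ha => (ha g hg).symm).compl

end Independence

section MultiplesDensity

/-- The density of the set of multiples of `C`: the limit of its probability under the zeta
distribution as `s` decreases to `1`, which is a supremum by monotonicity. -/
def multiplesDensity (C : Set ℕ) : ℝ≥0∞ := ⨆ s ∈ Ioi (1 : ℝ), zetaMeasure s (natMultiples C)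

variable {C D F G : Set ℕ} {s : ℝ}

lemma natMultiples_mono (h : C ⊆ D) : natMultiples C ⊆ natMultiples D :=
  fun _ ⟨c, hc, hcn⟩ => ⟨c, h hc, hcn⟩

lemma natMultiples_union (C D : Set ℕ) :
    natMultiples (C ∪ D) = natMultiples C ∪ natMultiples D := by
  ext n
  simp only [natMultiples, mem_ofPred_eq, mem_union, or_and_right, exists_or]

lemma zetaMeasure_natMultiples_le (hs : 1 < s) (C : Set ℕ) :
    zetaMeasure s (natMultiples C) ≤ multiplesDensity C :=
  le_iSup₂ (f := fun s (_ : s ∈ Ioi (1 : ℝ)) => zetaMeasure s (natMultiples C)) s hs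

lemma multiplesDensity_mono (h : C ⊆ D) : multiplesDensity C ≤ multiplesDensity D :=
  iSup₂_mono fun _ _ => measure_mono (natMultiples_mono h)

lemma multiplesDensity_le_one (C : Set ℕ) : multiplesDensity C ≤ 1 :=
  iSup₂_le fun _ hs => have := isProbabilityMeasure_zetaMeasure hs; prob_le_one

lemma multiplesDensity_empty : multiplesDensity ∅ = 0 := by
  simp [multiplesDensity, natMultiples]

lemma tendsto_zetaMeasure_natMultiples (C : Set ℕ) :
    Tendsto (fun s => zetaMeasure s (natMultiples C)) (𝓝[>] 1) (𝓝 (multiplesDensity C)) := by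
  have hanti : AntitoneOn (fun s => zetaMeasure s (natMultiples C)) (Ioi 1) :=
    fun t ht s _ hts => zetaMeasure_le_of_mul_mem ht hts
      fun d _ ⟨c, hc, hcn⟩ => ⟨c, hc, hcn.mul_left d⟩
  rw [multiplesDensity, ← sSup_image]
  exact hanti.tendsto_nhdsGT (OrderTop.bddAbove _)

lemma tendsto_zetaMeasure_compl_natMultiples (C : Set ℕ) :
    Tendsto (fun s => zetaMeasure s (natMultiples C)ᶜ) (𝓝[>] 1) (𝓝 (1 - multiplesDensity C)) := by
  refine (ENNReal.Tendsto.sub tendsto_const_nhds (tendsto_zetaMeasure_natMultiples C)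
    (.inl ENNReal.one_ne_top)).congr' ?_
  filter_upwards [self_mem_nhdsWithin] with s hs
  have := isProbabilityMeasure_zetaMeasure hs
  exact (prob_compl_eq_one_sub MeasurableSet.of_discrete).symm

lemma one_sub_multiplesDensity_union (hFG : ∀ f ∈ F, ∀ g ∈ G, f.Coprime g) :
    1 - multiplesDensity (F ∪ G) = (1 - multiplesDensity F) * (1 - multiplesDensity G) := by
  refine tendsto_nhds_unique (tendsto_zetaMeasure_compl_natMultiples (F ∪ G))
    ((ENNReal.Tendsto.mul (tendsto_zetaMeasure_compl_natMultiples F)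
      (.inr (ENNReal.sub_ne_top ENNReal.one_ne_top)) (tendsto_zetaMeasure_compl_natMultiples G)
      (.inr (ENNReal.sub_ne_top ENNReal.one_ne_top))).congr' ?_)
  filter_upwards [self_mem_nhdsWithin] with s hs
  rw [natMultiples_union, compl_union, (indepSet_compl_natMultiples hs hFG).measure_inter_eq_mul]

lemma tendsto_multiplesDensity_inter_Iic (C : Set ℕ) :
    Tendsto (fun n => multiplesDensity (C ∩ Iic n)) atTop (𝓝 (multiplesDensity C)) := by
  have hmono : Monotone fun n => C ∩ Iic n :=
    fun _ _ hmn => inter_subset_inter_right C (Iic_subset_Iic.2 hmn)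
  have hunion : natMultiples C = ⋃ n, natMultiples (C ∩ Iic n) := by
    refine subset_antisymm ?_ (iUnion_subset fun n => natMultiples_mono inter_subset_left)
    rintro k ⟨c, hc, hck⟩
    exact mem_iUnion.2 ⟨c, c, ⟨hc, self_mem_Iic⟩, hck⟩
  have hsup : multiplesDensity C = ⨆ n, multiplesDensity (C ∩ Iic n) := by
    have hs (s : ℝ) : zetaMeasure s (natMultiples C) =
        ⨆ n, zetaMeasure s (natMultiples (C ∩ Iic n)) := by
      rw [hunion]
      exact Monotone.measure_iUnion fun _ _ hmn => natMultiples_mono (hmono hmn)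
    simp only [multiplesDensity, hs]
    exact (iSup_congr fun s => iSup_comm).trans iSup_comm
  rw [hsup]
  exact tendsto_atTop_iSup fun _ _ hmn => multiplesDensity_mono (hmono hmn)

lemma Btilde_anti (C : Set ℕ) : Antitone (Btilde C) :=
  fun _ _ hMN _ hc => ⟨hc.1, fun p hp hpc => hMN.trans_lt (hc.2 p hp hpc)⟩

lemma Btilde_Btilde (C : Set ℕ) (M N : ℕ) : Btilde (Btilde C M) N = Btilde C (max M N) := by
  ext c
  simp only [Btilde, mem_ofPred_eq, max_lt_iff, forall_and, and_assoc]

lemma coprime_of_mem_Btilde {f g N : ℕ} (hf0 : f ≠ 0) (hfN : f ≤ N) (hg : g ∈ Btilde C N) :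
    f.Coprime g :=
  Nat.coprime_of_dvd fun p hp hpf hpg =>
    ((Nat.le_of_dvd (Nat.pos_of_ne_zero hf0) hpf).trans hfN).not_gt (hg.2 p hp hpg)

lemma multiplesDensity_eq_one_of_le_Btilde (h0 : 0 ∉ C) {η : ℝ≥0∞} (hη : η ≠ 0)
    (h : ∀ N, η ≤ multiplesDensity (Btilde C N)) : multiplesDensity C = 1 := by
  set x := 1 - multiplesDensity C
  have hstep (n : ℕ) : x ≤ (1 - multiplesDensity (C ∩ Iic n)) * (1 - η) := by
    calc x ≤ 1 - multiplesDensity (C ∩ Iic n ∪ Btilde C n) :=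
          tsub_le_tsub_left (multiplesDensity_mono (union_subset inter_subset_left
            fun _ hc => hc.1)) 1
      _ = (1 - multiplesDensity (C ∩ Iic n)) * (1 - multiplesDensity (Btilde C n)) :=
          one_sub_multiplesDensity_union fun f hf g hg =>
            coprime_of_mem_Btilde (ne_of_mem_of_not_mem hf.1 h0) hf.2 hg
      _ ≤ _ := by gcongr; exact h n
  have hxη : x ≤ x * (1 - η) :=
    ge_of_tendsto' (ENNReal.Tendsto.mul_const (ENNReal.Tendsto.sub tendsto_const_nhds
      (tendsto_multiplesDensity_inter_Iic C) (.inl ENNReal.one_ne_top))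
      (.inr (ENNReal.sub_ne_top ENNReal.one_ne_top))) hstep
  have hx0 : x = 0 := by
    by_contra hx0
    refine hxη.not_gt ?_
    have hlt : 1 - η < 1 := ENNReal.sub_lt_self ENNReal.one_ne_top one_ne_zero hη
    simpa using ENNReal.mul_lt_mul_right hx0 (ENNReal.sub_ne_top ENNReal.one_ne_top) hlt
  exact le_antisymm (multiplesDensity_le_one C) (tsub_eq_zero_iff_le.1 hx0)

lemma tendsto_multiplesDensity_Btilde_or (h0 : 0 ∉ C) :
    Tendsto (fun N => multiplesDensity (Btilde C N)) atTop (𝓝 0) ∨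
      ∀ N, multiplesDensity (Btilde C N) = 1 := by
  by_cases h : ∃ η ≠ 0, ∀ N, η ≤ multiplesDensity (Btilde C N)
  · obtain ⟨η, hη, hC⟩ := h
    refine .inr fun N => multiplesDensity_eq_one_of_le_Btilde (fun hc => h0 hc.1) hη fun M => ?_
    rw [Btilde_Btilde]
    exact hC _
  · push Not at h
    refine .inl (ENNReal.tendsto_nhds_zero.2 fun η hη => ?_)
    obtain ⟨N, hN⟩ := h η hη.ne'
    filter_upwards [eventually_ge_atTop N] with M hM
    exact (multiplesDensity_mono (Btilde_anti C hM)).trans hN.le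

end MultiplesDensity

section LogarithmicDensity

/-- The exponent `s = 1 + 1 / log n`, for which `k⁻ˢ` is comparable to `k⁻¹` for all `k ≤ n`. -/
def logExponent (n : ℕ) : ℝ := 1 + (Real.log n)⁻¹

lemma tendsto_log_natCast_atTop : Tendsto (fun n : ℕ => Real.log n) atTop atTop :=
  Real.tendsto_log_atTop.comp tendsto_natCast_atTop_atTop

lemma tendsto_logExponent : Tendsto logExponent atTop (𝓝[>] 1) := by
  refine tendsto_nhdsWithin_iff.2 ⟨?_, ?_⟩
  · have hlim := tendsto_log_natCast_atTop.inv_tendsto_atTop.const_add (1 : ℝ)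
    rwa [add_zero] at hlim
  · filter_upwards [tendsto_log_natCast_atTop.eventually_gt_atTop 0] with n hn
    exact lt_add_of_pos_right 1 (inv_pos.2 hn)

lemma eventually_dirichletMeasure_univ_le :
    ∀ᶠ s : ℝ in 𝓝[>] 1, dirichletMeasure s univ ≤ ENNReal.ofReal (2 / (s - 1)) := by
  filter_upwards [tendsto_sub_mul_tsum_nat_rpow.eventually_lt_const one_lt_two,
    self_mem_nhdsWithin] with s hs (hs1 : 1 < s)
  rw [dirichletMeasure_univ hs1]
  refine ENNReal.ofReal_le_ofReal ((le_div_iff₀' (sub_pos.2 hs1)).2 ?_)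
  simpa only [Real.rpow_neg (Nat.cast_nonneg _), one_div] using hs.le

lemma inv_le_mul_rpow_neg_logExponent {k n : ℕ} (hk : 1 ≤ k) (hkn : k ≤ n) (hn : 0 < Real.log n) :
    (k : ℝ)⁻¹ ≤ 3 * (k : ℝ) ^ (-logExponent n) := by
  have hk0 : (0 : ℝ) < k := by exact_mod_cast hk
  have hratio : Real.log k * (Real.log n)⁻¹ ≤ 1 := by
    rw [← div_eq_mul_inv, div_le_one hn]
    exact Real.log_le_log hk0 (by exact_mod_cast hkn)
  calc (k : ℝ)⁻¹ = (k : ℝ) ^ (Real.log n)⁻¹ * (k : ℝ) ^ (-logExponent n) := by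
        rw [← Real.rpow_add hk0, ← Real.rpow_neg_one]
        congr 1
        rw [logExponent]
        ring
    _ ≤ 3 * (k : ℝ) ^ (-logExponent n) := by
        gcongr
        rw [Real.rpow_def_of_pos hk0]
        exact (Real.exp_le_exp.2 hratio).trans Real.exp_one_lt_three.le

lemma indicator_inv_nonneg (S : Set ℤ) (k : ℕ) : 0 ≤ S.indicator (fun m : ℤ => (m : ℝ)⁻¹) k :=
  indicator_apply_nonneg fun _ => by positivity

lemma ofReal_sum_indicator_inv_le {n : ℕ} (hn : 0 < Real.log n) (S : Set ℤ) :
    ENNReal.ofReal (∑ k ∈ Finset.Icc 1 n, S.indicator (fun m : ℤ => (m : ℝ)⁻¹) (k : ℤ)) ≤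
      3 * dirichletMeasure (logExponent n) ((↑) ⁻¹' S) := by
  have hterm : ∀ k ∈ Finset.Icc 1 n, ENNReal.ofReal (S.indicator (fun m : ℤ => (m : ℝ)⁻¹) k) ≤
      3 * ((↑) ⁻¹' S : Set ℕ).indicator (fun k => dirichletMeasure (logExponent n) {k}) k := by
    intro k hk
    by_cases hkS : (k : ℤ) ∈ S
    · have hkS' : k ∈ ((↑) ⁻¹' S : Set ℕ) := hkS
      obtain ⟨hk1, hkn⟩ := Finset.mem_Icc.1 hk
      rw [indicator_of_mem hkS, indicator_of_mem hkS', dirichletMeasure,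
        withDensity_count_singleton, dirichletWeight, Int.cast_natCast, ← ENNReal.ofReal_ofNat,
        ← ENNReal.ofReal_mul (by norm_num)]
      exact ENNReal.ofReal_le_ofReal (inv_le_mul_rpow_neg_logExponent hk1 hkn hn)
    · simp [indicator_of_notMem hkS]
  rw [ENNReal.ofReal_sum_of_nonneg fun k _ => indicator_inv_nonneg S k]
  refine (Finset.sum_le_sum hterm).trans ?_
  rw [← Finset.mul_sum, ← Measure.tsum_indicator_apply_singleton _ _ MeasurableSet.of_discrete]
  gcongr
  exact ENNReal.sum_le_tsum _

-- `6 = 3 * 2`, where `3` bounds `e` and `2` bounds `(s - 1) ζ(s)` for `s` near `1`.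
lemma logWeight_le_zetaMeasure :
    ∀ᶠ n in atTop, ∀ S : Set ℤ,
      logWeight S n ≤ 6 * (zetaMeasure (logExponent n)).real ((↑) ⁻¹' S) := by
  filter_upwards [tendsto_log_natCast_atTop.eventually_gt_atTop 0,
    tendsto_logExponent.eventually eventually_dirichletMeasure_univ_le,
    tendsto_logExponent.eventually self_mem_nhdsWithin] with n hn hζ hs S
  have := isProbabilityMeasure_zetaMeasure hs
  set P := zetaMeasure (logExponent n)
  have hζ' : dirichletMeasure (logExponent n) univ ≤ ENNReal.ofReal (2 * Real.log n) := by
    simpa only [logExponent, add_sub_cancel_left, div_inv_eq_mul] using hζ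
  have hsum : ENNReal.ofReal (∑ k ∈ Finset.Icc 1 n, S.indicator (fun m : ℤ => (m : ℝ)⁻¹) (k : ℤ)) ≤
      ENNReal.ofReal (3 * (2 * Real.log n * P.real ((↑) ⁻¹' S))) := by
    refine (ofReal_sum_indicator_inv_le hn S).trans ?_
    rw [ENNReal.ofReal_mul (by norm_num), ENNReal.ofReal_mul (by positivity), ofReal_measureReal,
      ENNReal.ofReal_ofNat, dirichletMeasure_eq_mul_zetaMeasure hs]
    gcongr
  rw [logWeight, inv_mul_le_iff₀ hn]
  linarith [(ENNReal.ofReal_le_ofReal_iff (by positivity)).1 hsum]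

lemma logWeight_nonneg (S : Set ℤ) (n : ℕ) : 0 ≤ logWeight S n :=
  mul_nonneg (inv_nonneg.2 (Real.log_natCast_nonneg n))
    (Finset.sum_nonneg fun k _ => indicator_inv_nonneg S k)

lemma logWeight_le_add {S S₁ S₂ : Set ℤ} (h : ∀ k : ℕ, (k : ℤ) ∈ S → (k : ℤ) ∈ S₁ ∪ S₂) (n : ℕ) :
    logWeight S n ≤ logWeight S₁ n + logWeight S₂ n := by
  rw [logWeight, logWeight, logWeight, ← mul_add, ← Finset.sum_add_distrib]
  gcongr with k
  have h₁ := indicator_inv_nonneg S₁ k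
  have h₂ := indicator_inv_nonneg S₂ k
  by_cases hk : (k : ℤ) ∈ S
  · rw [indicator_of_mem hk]
    rcases h k hk with hk' | hk'
    · rw [indicator_of_mem hk']
      linarith
    · rw [indicator_of_mem hk']
      linarith
  · rw [indicator_of_notMem hk]
    linarith

lemma eventually_logWeight_le_six (S : Set ℤ) : ∀ᶠ n in atTop, logWeight S n ≤ 6 := by
  filter_upwards [logWeight_le_zetaMeasure, tendsto_logExponent.eventually self_mem_nhdsWithin]
    with n hn hs
  have := isProbabilityMeasure_zetaMeasure hs
  exact (hn S).trans (mul_le_of_le_one_right (by norm_num) measureReal_le_one)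

lemma isBoundedUnder_le_logWeight (S : Set ℤ) : IsBoundedUnder (· ≤ ·) atTop (logWeight S) :=
  ⟨6, eventually_map.2 (eventually_logWeight_le_six S)⟩

lemma isBoundedUnder_ge_logWeight (S : Set ℤ) : IsBoundedUnder (· ≥ ·) atTop (logWeight S) :=
  ⟨0, eventually_map.2 (.of_forall (logWeight_nonneg S))⟩

lemma logDensLow_le_of_mem_union {S S₁ S₂ : Set ℤ}
    (h : ∀ k : ℕ, (k : ℤ) ∈ S → (k : ℤ) ∈ S₁ ∪ S₂)
    (h₂ : Tendsto (logWeight S₂) atTop (𝓝 0)) : logDensLow S ≤ logDensLow S₁ :=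
  calc logDensLow S ≤ liminf (logWeight S₂ + logWeight S₁) atTop := by
        refine liminf_le_liminf (.of_forall fun n => ?_) (isBoundedUnder_ge_logWeight S) ?_
        · rw [Pi.add_apply, add_comm]
          exact logWeight_le_add h n
        · exact (isBoundedUnder_le_add (isBoundedUnder_le_logWeight S₂)
            (isBoundedUnder_le_logWeight S₁)).isCoboundedUnder_ge
    _ ≤ limsup (logWeight S₂) atTop + liminf (logWeight S₁) atTop :=
        liminf_add_le (isBoundedUnder_ge_logWeight S₂) (isBoundedUnder_le_logWeight S₂)
          (isBoundedUnder_ge_logWeight S₁) (isBoundedUnder_le_logWeight S₁).isCoboundedUnder_ge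
    _ = logDensLow S₁ := by rw [h₂.limsup_eq, zero_add, logDensLow]

lemma tendsto_logWeight_zero {S : Set ℤ}
    (h : Tendsto (fun s => zetaMeasure s ((↑) ⁻¹' S)) (𝓝[>] 1) (𝓝 0)) :
    Tendsto (logWeight S) atTop (𝓝 0) := by
  have hreal : Tendsto (fun n => 6 * (zetaMeasure (logExponent n)).real ((↑) ⁻¹' S)) atTop
      (𝓝 0) := by
    simpa [Measure.real] using ((ENNReal.tendsto_toReal ENNReal.zero_ne_top).comp
      (h.comp tendsto_logExponent)).const_mul 6
  exact squeeze_zero' (.of_forall (logWeight_nonneg S))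
    (logWeight_le_zetaMeasure.mono fun n hn => hn S) hreal

lemma natCast_preimage_multiplesZ (C : Set ℕ) : (↑) ⁻¹' multiplesZ C = natMultiples C := by
  ext n
  simp only [multiplesZ, natMultiples, mem_preimage, mem_ofPred_eq, Int.natCast_dvd_natCast]

lemma logDensLow_multiplesZ_le (C : Set ℕ) :
    logDensLow (multiplesZ C) ≤ 6 * (multiplesDensity C).toReal := by
  refine liminf_le_of_frequently_le (Eventually.frequently ?_) (isBoundedUnder_ge_logWeight _)
  filter_upwards [logWeight_le_zetaMeasure, tendsto_logExponent.eventually self_mem_nhdsWithin]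
    with n hn hs
  refine (hn _).trans ?_
  rw [natCast_preimage_multiplesZ]
  gcongr
  exact ENNReal.toReal_mono (ne_top_of_le_ne_top ENNReal.one_ne_top (multiplesDensity_le_one C))
    (zetaMeasure_natMultiples_le hs C)

end LogarithmicDensity

section Cofactors

/-- The cofactors `c > 1` of `a` in `B`: those with `a * c ∈ B`. -/
def cofactors (B : Set ℕ) (a : ℕ) : Set ℕ := {c | 1 < c ∧ a * c ∈ B}

variable {B : Set ℕ} {a c : ℕ}

-- Otherwise almost every multiple of `a` would be a multiple of some element of `B ∖ {a c}`, and
-- removing `a c` from `B` would not lower the density.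
lemma multiplesDensity_ne_one_of_isTaut (hB : IsTaut B) (hac : a * c ∈ B) :
    multiplesDensity {d | a * d ∈ B \ {a * c}} ≠ 1 := by
  set C := {d | a * d ∈ B \ {a * c}}
  intro hC
  let T : Set ℤ := (↑) '' ((a * ·) '' (natMultiples C)ᶜ)
  have hT : Tendsto (logWeight T) atTop (𝓝 0) := by
    refine tendsto_logWeight_zero ?_
    have hcompl := tendsto_zetaMeasure_compl_natMultiples C
    rw [hC, tsub_self] at hcompl
    refine tendsto_of_tendsto_of_tendsto_of_le_of_le' tendsto_const_nhds hcompl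
      (.of_forall fun _ => zero_le) ?_
    filter_upwards [self_mem_nhdsWithin] with s hs
    rw [preimage_image_eq _ Nat.cast_injective, zetaMeasure_image_mul (one_pos.trans hs).ne']
    exact mul_le_of_le_one_left' (dirichletWeight_le_one hs a)
  refine (hB _ hac).not_ge (logDensLow_le_of_mem_union ?_ hT)
  rintro k ⟨b, hb, hbk⟩
  by_cases hbac : b = a * c
  · obtain ⟨m, rfl⟩ : a * c ∣ k := by exact_mod_cast hbac ▸ hbk
    by_cases hm : c * m ∈ natMultiples C
    · obtain ⟨d, hd, hdm⟩ := hm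
      refine .inl ⟨a * d, hd, ?_⟩
      rw [mul_assoc]
      exact_mod_cast mul_dvd_mul_left a hdm
    · exact .inr ⟨_, ⟨c * m, hm, rfl⟩, by rw [mul_assoc]⟩
  · exact .inl ⟨b, ⟨hb, hbac⟩, hbk⟩

lemma tendsto_multiplesDensity_Btilde_cofactors (hB : IsTaut B) (ha : a ≠ 0) :
    Tendsto (fun N => multiplesDensity (Btilde (cofactors B a) N)) atTop (𝓝 0) := by
  refine (tendsto_multiplesDensity_Btilde_or fun h => by simpa using h.1).resolve_right
    fun hone => ?_
  obtain ⟨c, hc⟩ : (Btilde (cofactors B a) 0).Nonempty := by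
    by_contra hempty
    have h := hone 0
    rw [not_nonempty_iff_eq_empty.1 hempty, multiplesDensity_empty] at h
    exact zero_ne_one h
  have hsub : Btilde (cofactors B a) c ⊆ {d | a * d ∈ B \ {a * c}} := by
    rintro d ⟨⟨hd, hadB⟩, hprime⟩
    refine ⟨hadB, fun had => ?_⟩
    obtain rfl : d = c := mul_right_injective₀ ha had
    exact (hprime _ (Nat.minFac_prime hd.ne') d.minFac_dvd).not_ge (Nat.minFac_le (by positivity))
  exact multiplesDensity_ne_one_of_isTaut hB hc.1.2
    (le_antisymm (multiplesDensity_le_one _) ((hone c).symm.trans_le (multiplesDensity_mono hsub)))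

end Cofactors

section FactoredSet

/-- The nonzero integers all of whose prime factors lie in `A`: the analogue of
`Nat.factoredNumbers` for a possibly infinite set `A`. -/
def factoredSet (A : Set ℕ) : Set ℕ := {a | a ≠ 0 ∧ ∀ p, p.Prime → p ∣ a → p ∈ A}

variable {A : Set ℕ}

lemma exists_factoredSet_mul_eq (A : Set ℕ) {b : ℕ} (hb : b ≠ 0) :
    ∃ a ∈ factoredSet A, ∃ c, (∀ p, p.Prime → p ∣ c → p ∉ A) ∧ a * c = b := by
  induction b using induction_on_primes with
  | zero => exact absurd rfl hb
  | one =>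
    have hone : ∀ p : ℕ, p.Prime → ¬ p ∣ 1 := fun p hp => hp.one_lt.not_ge ∘ Nat.le_of_dvd one_pos
    exact ⟨1, ⟨one_ne_zero, fun p hp h => absurd h (hone p hp)⟩, 1,
      fun p hp h => absurd h (hone p hp), one_mul 1⟩
  | prime_mul p b hp ih =>
    obtain ⟨a, ⟨ha0, ha⟩, c, hc, rfl⟩ := ih (right_ne_zero_of_mul hb)
    have hdvd {q n : ℕ} (hq : q.Prime) (h : q ∣ p * n) : q = p ∨ q ∣ n :=
      (hq.dvd_mul.1 h).imp_left (Nat.prime_dvd_prime_iff_eq hq hp).1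
    by_cases hpA : p ∈ A
    · refine ⟨p * a, ⟨mul_ne_zero hp.ne_zero ha0, fun q hq h => ?_⟩, c, hc, mul_assoc p a c⟩
      exact (hdvd hq h).elim (· ▸ hpA) (ha q hq)
    · refine ⟨a, ⟨ha0, ha⟩, p * c, fun q hq h => ?_, mul_left_comm a p c⟩
      exact (hdvd hq h).elim (· ▸ hpA) (hc q hq)

lemma inv_one_sub_le_exp {x : ℝ} (hx : 0 ≤ x) (hx' : x ≤ 1 / 2) :
    (1 - x)⁻¹ ≤ Real.exp (2 * x) := by
  rw [inv_le_iff_one_le_mul₀ (by linarith)]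
  calc 1 ≤ (2 * x + 1) * (1 - x) := by nlinarith
    _ ≤ Real.exp (2 * x) * (1 - x) := by
        gcongr
        · linarith
        · exact Real.add_one_le_exp _

lemma prod_prime_inv_one_sub_inv_le_exp (T : Finset ℕ) :
    ∏ p ∈ T with p.Prime, (1 - (p : ℝ)⁻¹)⁻¹ ≤ Real.exp (2 * ∑ p ∈ T, (p : ℝ)⁻¹) := by
  have hhalf : ∀ p ∈ T.filter Nat.Prime, (p : ℝ)⁻¹ ≤ 1 / 2 := fun p hp => by
    rw [one_div]
    gcongr
    exact_mod_cast (Finset.mem_filter.1 hp).2.two_le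
  calc ∏ p ∈ T with p.Prime, (1 - (p : ℝ)⁻¹)⁻¹
      ≤ ∏ p ∈ T with p.Prime, Real.exp (2 * (p : ℝ)⁻¹) :=
        Finset.prod_le_prod (fun p hp => inv_nonneg.2 (by linarith [hhalf p hp]))
          fun p hp => inv_one_sub_le_exp (by positivity) (hhalf p hp)
    _ = Real.exp (2 * ∑ p ∈ T with p.Prime, (p : ℝ)⁻¹) := by rw [Finset.mul_sum, Real.exp_sum]
    _ ≤ Real.exp (2 * ∑ p ∈ T, (p : ℝ)⁻¹) := by
        gcongr
        exact Finset.filter_subset _ T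

lemma tsum_factoredNumbers_inv_le (T : Finset ℕ) :
    ∑' a : Nat.factoredNumbers T, ((a : ℕ) : ℝ≥0∞)⁻¹ ≤
      ENNReal.ofReal (Real.exp (2 * ∑ p ∈ T, (p : ℝ)⁻¹)) := by
  let f : ℕ →* ℝ := (invMonoidHom : ℝ →* ℝ).comp (Nat.castRingHom ℝ)
  have hf {p : ℕ} (hp : p.Prime) : ‖f p‖ < 1 := by
    simpa [f] using inv_lt_one_of_one_lt₀ (Nat.one_lt_cast (α := ℝ).2 hp.one_lt)
  have hsum : HasSum (fun a : Nat.factoredNumbers T => (a : ℝ)⁻¹)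
      (∏ p ∈ T with p.Prime, (1 - (p : ℝ)⁻¹)⁻¹) :=
    (EulerProduct.summable_and_hasSum_factoredNumbers_prod_filter_prime_geometric hf T).2
  have hcast (a : Nat.factoredNumbers T) : ((a : ℕ) : ℝ≥0∞)⁻¹ = ENNReal.ofReal (a : ℝ)⁻¹ := by
    rw [ENNReal.ofReal_inv_of_pos (Nat.cast_pos.2 (Nat.pos_of_ne_zero a.2.1)),
      ENNReal.ofReal_natCast]
  rw [tsum_congr hcast, ← ENNReal.ofReal_tsum_of_nonneg (fun _ => by positivity) hsum.summable,
    hsum.tsum_eq]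
  exact ENNReal.ofReal_le_ofReal (prod_prime_inv_one_sub_inv_le_exp T)

lemma tsum_factoredSet_inv_ne_top (hA : Summable fun p : A => (p : ℝ)⁻¹) :
    ∑' a : factoredSet A, ((a : ℕ) : ℝ≥0∞)⁻¹ ≠ ∞ := by
  refine ne_top_of_le_ne_top
    (ENNReal.ofReal_ne_top (r := Real.exp (2 * ∑' p : A, (p : ℝ)⁻¹))) ?_
  rw [ENNReal.tsum_eq_iSup_sum]
  refine iSup_le fun F => ?_
  let T : Finset ℕ := F.biUnion fun a => (a : ℕ).primeFactors
  have hTA : ∀ p ∈ T, p ∈ A := fun p hp => by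
    obtain ⟨a, -, hpa⟩ := Finset.mem_biUnion.1 hp
    exact a.2.2 p (Nat.prime_of_mem_primeFactors hpa) (Nat.dvd_of_mem_primeFactors hpa)
  have hFT : (F.map (Function.Embedding.subtype _) : Set ℕ) ⊆ Nat.factoredNumbers T := by
    intro n hn
    obtain ⟨a, ha, rfl⟩ := Finset.mem_map.1 hn
    exact Nat.mem_factoredNumbers_of_primeFactors_subset a.2.1
      (Finset.subset_biUnion_of_mem (fun a : factoredSet A => (a : ℕ).primeFactors) ha)
  calc ∑ a ∈ F, ((a : ℕ) : ℝ≥0∞)⁻¹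
      = ∑' a : (F.map (Function.Embedding.subtype _) : Set ℕ), ((a : ℕ) : ℝ≥0∞)⁻¹ := by
        rw [Finset.tsum_subtype' _ fun a : ℕ => (a : ℝ≥0∞)⁻¹, Finset.sum_map]
        rfl
    _ ≤ ∑' a : Nat.factoredNumbers T, ((a : ℕ) : ℝ≥0∞)⁻¹ :=
        ENNReal.tsum_mono_subtype (fun a : ℕ => (a : ℝ≥0∞)⁻¹) hFT
    _ ≤ ENNReal.ofReal (Real.exp (2 * ∑ p ∈ T, (p : ℝ)⁻¹)) := tsum_factoredNumbers_inv_le T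
    _ ≤ ENNReal.ofReal (Real.exp (2 * ∑' p : A, (p : ℝ)⁻¹)) := by
        gcongr
        rw [← Finset.sum_subtype_of_mem _ hTA]
        exact hA.sum_le_tsum _ fun p _ => by positivity

end FactoredSet

section Exhaustion

variable {A B : Set ℕ}

lemma natMultiples_subset_iUnion_cofactors (hB0 : 0 ∉ B) {P : Set ℕ} {N : ℕ}
    (hP : ∀ p, p.Prime → p ≤ N → p ∉ A → p ∈ P) :
    natMultiples (B \ ({b ∈ B | ∀ p : ℕ, p.Prime → p ∣ b → p ∈ A} ∪ natMultiples P)) ⊆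
      ⋃ a : factoredSet A, ((a : ℕ) * ·) '' natMultiples (Btilde (cofactors B a) N) := by
  rintro _ ⟨b, ⟨hbB, hb⟩, m, rfl⟩
  obtain ⟨a, ha, c, hc, rfl⟩ := exists_factoredSet_mul_eq A (ne_of_mem_of_not_mem hbB hB0)
  have hc0 : c ≠ 0 := right_ne_zero_of_mul (ne_of_mem_of_not_mem hbB hB0)
  have hc1 : c ≠ 1 := by
    rintro rfl
    exact hb (.inl ⟨hbB, by simpa only [mul_one] using ha.2⟩)
  refine mem_iUnion.2 ⟨⟨a, ha⟩, c * m, ⟨c, ⟨⟨by lia, hbB⟩, fun p hp hpc => ?_⟩, dvd_mul_right c m⟩,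
    (mul_assoc a c m).symm⟩
  by_contra! hpN
  exact hb (.inr ⟨p, hP p hp hpN (hc p hp hpc), hpc.mul_left a⟩)

lemma multiplesDensity_sdiff_le_tsum (hB0 : 0 ∉ B) {P : Set ℕ} {N : ℕ}
    (hP : ∀ p, p.Prime → p ≤ N → p ∉ A → p ∈ P) :
    multiplesDensity (B \ ({b ∈ B | ∀ p : ℕ, p.Prime → p ∣ b → p ∈ A} ∪ natMultiples P)) ≤
      ∑' a : factoredSet A, ((a : ℕ) : ℝ≥0∞)⁻¹ * multiplesDensity (Btilde (cofactors B a) N) := by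
  refine iSup₂_le fun s hs => ?_
  refine (measure_mono (natMultiples_subset_iUnion_cofactors hB0 hP)).trans
    ((measure_iUnion_le _).trans (ENNReal.tsum_le_tsum fun a => ?_))
  rw [zetaMeasure_image_mul (one_pos.trans hs).ne']
  exact mul_le_mul' (dirichletWeight_le_inv hs.le a) (zetaMeasure_natMultiples_le hs _)

lemma tendsto_tsum_inv_mul_multiplesDensity (hB : IsTaut B)
    (hA : Summable fun p : A => (p : ℝ)⁻¹) :
    Tendsto (fun N => ∑' a : factoredSet A,
      ((a : ℕ) : ℝ≥0∞)⁻¹ * multiplesDensity (Btilde (cofactors B a) N)) atTop (𝓝 0) := by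
  have hlim := tendsto_lintegral_of_dominated_convergence (μ := Measure.count)
    (F := fun N (a : factoredSet A) =>
      ((a : ℕ) : ℝ≥0∞)⁻¹ * multiplesDensity (Btilde (cofactors B a) N)) (f := 0)
    (fun a => ((a : ℕ) : ℝ≥0∞)⁻¹) (fun _ => .of_discrete)
    (fun N => .of_forall fun a => mul_le_of_le_one_right' (multiplesDensity_le_one _))
    (by rw [lintegral_count]; exact tsum_factoredSet_inv_ne_top hA)
    (.of_forall fun a => by
      have hinv : ((a : ℕ) : ℝ≥0∞)⁻¹ ≠ ∞ := by simpa using a.2.1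
      simpa using ENNReal.Tendsto.const_mul
        (tendsto_multiplesDensity_Btilde_cofactors hB a.2.1) (.inr hinv))
  simpa [lintegral_count] using hlim

theorem taut_prime_exhaust_general (hB0 : 0 ∉ B) (htaut : IsTaut B)
    (hA : Summable fun p : A => (p : ℝ)⁻¹) {ε : ℝ} (hε : 0 < ε) :
    ∃ P : Finset ℕ, (∀ p ∈ P, p.Prime) ∧ (∀ p ∈ P, p ∉ A) ∧
      logDensLow (multiplesZ
        (B \ ({b ∈ B | ∀ p : ℕ, p.Prime → p ∣ b → p ∈ A} ∪ natMultiples ↑P))) < ε := by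
  have hε' : 0 < ENNReal.ofReal (ε / 6) := ENNReal.ofReal_pos.2 (by positivity)
  obtain ⟨N, hN⟩ :=
    ((tendsto_tsum_inv_mul_multiplesDensity htaut hA).eventually_lt_const hε').exists
  let P : Finset ℕ := {p ∈ Finset.Iic N | p.Prime ∧ p ∉ A}
  have hP : ∀ p, p.Prime → p ≤ N → p ∉ A → p ∈ (P : Set ℕ) := fun p hp hpN hpA =>
    Finset.mem_filter.2 ⟨Finset.mem_Iic.2 hpN, hp, hpA⟩
  have hlt := ENNReal.toReal_lt_of_lt_ofReal ((multiplesDensity_sdiff_le_tsum hB0 hP).trans_lt hN)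
  refine ⟨P, fun p hp => (Finset.mem_filter.1 hp).2.1, fun p hp => (Finset.mem_filter.1 hp).2.2, ?_⟩
  calc _ ≤ 6 * (multiplesDensity _).toReal := logDensLow_multiplesZ_le _
    _ < 6 * (ε / 6) := by gcongr
    _ = ε := by ring

end Exhaustion

/-- For a taut set `B`, a finite set `A` of primes and `ε > 0` there is a finite set `P`
of primes, disjoint from `A`, with `δ(M_{B ∖ (B_A ∪ M_P)}) < ε`. -/
theorem taut_prime_exhaust (B : Set ℕ) (hB0 : 0 ∉ B) (hprim : Primitive B) (htaut : IsTaut B)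
    (A : Finset ℕ) (hA : ∀ p ∈ A, p.Prime) (ε : ℝ) (hε : 0 < ε) :
    ∃ P : Finset ℕ, (∀ p ∈ P, p.Prime) ∧ (∀ p ∈ P, p ∉ A) ∧
      logDensLow (multiplesZ
        (B \ ({b ∈ B | ∀ p : ℕ, p.Prime → p ∣ b → p ∈ A} ∪ natMultiples ↑P))) < ε :=
  taut_prime_exhaust_general (A := A) hB0 htaut (A.summable fun p : ℕ => (p : ℝ)⁻¹) hε
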